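/- arXiv:2405.08390 — 4 statements merged into one kernel-verified Lean document; each statement's English description precedes it below -/
import Mathlib

section
/- Let d ≥ 2. (i) For every f ∈ C_c^∞(ℝ^d;ℝ^d) there exists a smooth matrix field U ∈ C^∞(ℝ^d; S₀^{d×d}) with div U = f. (ii) Moreover, for every f ∈ C_c^∞(ℝ^d;ℝ^d) there exists a smooth matrix field V ∈ C^∞(ℝ^d; S₀^{d×d}) with div V = Δ²f, supp V ⊆ supp f, and ∫_{ℝ^d} V(x) dx = 0. -/
open MeasureTheory

noncomputable section

/-- Vectors in ℝ^d. -/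
abbrev Vec (d : ℕ) := Fin d → ℝ

/-- Matrices (as functions) on ℝ^d. -/
abbrev Mat (d : ℕ) := Fin d → Fin d → ℝ

/-- Partial derivative ∂ᵢ of a scalar function. -/
def pd {d : ℕ} (i : Fin d) (f : Vec d → ℝ) (x : Vec d) : ℝ :=
  fderiv ℝ f x (Pi.single i 1)

/-- The Laplacian of a scalar function. -/
def lap {d : ℕ} (f : Vec d → ℝ) (x : Vec d) : ℝ := ∑ i, pd i (fun y => pd i f y) x

/-- The bi-Laplacian Δ² of a scalar function. -/
def bilap {d : ℕ} (f : Vec d → ℝ) (x : Vec d) : ℝ := lap (fun y => lap f y) x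


/-- smooth functions vanishing off `K` -/
def SK {d : ℕ} (K : Set (Vec d)) : Submodule ℝ (Vec d → ℝ) where
  carrier := {h | ContDiff ℝ (⊤ : ℕ∞) h ∧ tsupport h ⊆ K}
  add_mem' := fun {a b} ha hb =>
    ⟨ha.1.add hb.1, (tsupport_add a b).trans (Set.union_subset ha.2 hb.2)⟩
  zero_mem' := ⟨contDiff_const, by
    have : tsupport (0 : Vec d → ℝ) = ∅ := by simp
    rw [this]; exact Set.empty_subset _⟩
  smul_mem' := fun c h hh => ⟨hh.1.const_smul c,
    (closure_mono (Function.support_const_smul_subset c h)).trans hh.2⟩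

lemma pd_contDiff {d : ℕ} (i : Fin d) {h : Vec d → ℝ} (hh : ContDiff ℝ (⊤ : ℕ∞) h) :
    ContDiff ℝ (⊤ : ℕ∞) (pd i h) :=
  (contDiff_infty_iff_fderiv.1 hh).2.clm_apply contDiff_const

lemma SK.diff {d : ℕ} {K : Set (Vec d)} (h : SK K) : Differentiable ℝ (h : Vec d → ℝ) :=
  h.2.1.differentiable (by simp)

/-- partial derivative as an operator -/
def PD {d : ℕ} (K : Set (Vec d)) (i : Fin d) : Module.End ℝ (SK K) where
  toFun h := ⟨pd i h.1, pd_contDiff i h.2.1,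
    (tsupport_fderiv_apply_subset ℝ (f := h.1) (Pi.single i 1)).trans h.2.2⟩
  map_add' a b := by
    apply Subtype.ext; funext x
    change fderiv ℝ (a.1 + b.1) x _ = fderiv ℝ a.1 x _ + fderiv ℝ b.1 x _
    rw [fderiv_add (SK.diff a x) (SK.diff b x)]; rfl
  map_smul' c a := by
    apply Subtype.ext; funext x
    change fderiv ℝ (c • a.1) x _ = c • fderiv ℝ a.1 x _
    rw [fderiv_const_smul (SK.diff a x)]; rfl

lemma PD_comm {d : ℕ} (K : Set (Vec d)) (i j : Fin d) : Commute (PD K i) (PD K j) := by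
  apply LinearMap.ext; intro h
  apply Subtype.ext; funext x
  have key : ∀ i j : Fin d, pd i (pd j h.1) x
      = fderiv ℝ (fderiv ℝ h.1) x (Pi.single i 1) (Pi.single j 1) := by
    intro i j
    have hd : DifferentiableAt ℝ (fderiv ℝ h.1) x :=
      (contDiff_infty_iff_fderiv.1 h.2.1).2.differentiable (by simp) x
    change fderiv ℝ (fun y => fderiv ℝ h.1 y (Pi.single j 1)) x (Pi.single i 1) = _
    rw [fderiv_clm_apply hd (differentiableAt_const _)]
    simp
  change pd i (pd j h.1) x = pd j (pd i h.1) x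
  rw [key, key]
  exact (h.2.1.contDiffAt.isSymmSndFDerivAt
    (by simp only [minSmoothness_of_isRCLikeNormedField]; exact WithTop.coe_le_coe.2 (le_top : (2 : ℕ∞) ≤ ⊤))) _ _

/-- Laplace operator -/
def LP {d : ℕ} (K : Set (Vec d)) : Module.End ℝ (SK K) := ∑ i, PD K i * PD K i

lemma LP_comm {d : ℕ} (K : Set (Vec d)) (j : Fin d) : Commute (LP K) (PD K j) :=
  Commute.sum_left _ _ _ fun i _ => (PD_comm K i j).mul_left (PD_comm K i j)

lemma SK.coe_sum {d : ℕ} {K : Set (Vec d)} (g : Fin d → SK K) (x : Vec d) :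
    (∑ i, g i : SK K).1 x = ∑ i, (g i).1 x := by
  rw [Submodule.coe_sum]; simp

lemma LP_coe {d : ℕ} (K : Set (Vec d)) (h : SK K) : (LP K h).1 = lap h.1 := by
  funext x
  simp only [LP, LinearMap.sum_apply]
  rw [SK.coe_sum]; rfl

lemma int_PD {d : ℕ} {K : Set (Vec d)} (hK : IsCompact K) (i : Fin d) (h : SK K) :
    ∫ x, (PD K i h).1 x = 0 := by
  have I : ∀ g : SK K, Integrable g.1 := fun g =>
    g.2.1.continuous.integrable_of_hasCompactSupport
      (hK.of_isClosed_subset (isClosed_tsupport _) g.2.2)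
  have := integral_mul_fderiv_eq_neg_fderiv_mul_of_integrable (𝕜 := ℝ) (μ := volume)
    (f := fun _ : Vec d => (1 : ℝ)) (g := h.1) (v := Pi.single i 1) (by simp)
    (by simp only [one_mul]; exact I (PD K i h)) (by simpa using I h)
    (fun _ _ => by fun_prop) (fun x _ => SK.diff h x)
  simp only [one_mul] at this
  change ∫ x, fderiv ℝ h.1 x (Pi.single i 1) = 0
  simpa using this

/-- the integral -/
def JJ {d : ℕ} {K : Set (Vec d)} (hK : IsCompact K) : SK K →ₗ[ℝ] ℝ where
  toFun h := ∫ x, h.1 x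
  map_add' a b := by
    have I : ∀ g : SK K, Integrable g.1 := fun g =>
      g.2.1.continuous.integrable_of_hasCompactSupport
        (hK.of_isClosed_subset (isClosed_tsupport _) g.2.2)
    exact integral_add (I a) (I b)
  map_smul' c a := integral_const_mul c a.1

lemma JJ_PD {d : ℕ} {K : Set (Vec d)} (hK : IsCompact K) (i : Fin d) (h : SK K) :
    JJ hK (PD K i h) = 0 := int_PD hK i h

lemma JJ_LP {d : ℕ} {K : Set (Vec d)} (hK : IsCompact K) (h : SK K) :
    JJ hK (LP K h) = 0 := by
  simp only [LP, LinearMap.sum_apply, Module.End.mul_apply, map_sum, JJ_PD]; simp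

lemma part2 (d : ℕ) (hd : 2 ≤ d) (f : Vec d → Vec d) (hf : ContDiff ℝ (⊤ : ℕ∞) f)
    (hc : HasCompactSupport f) :
      ∃ V : Vec d → Mat d,
        (∀ i j, ContDiff ℝ (⊤ : ℕ∞) (fun x => V x i j)) ∧
        (∀ x i j, V x i j = V x j i) ∧
        (∀ x, ∑ i, V x i i = 0) ∧
        (∀ x i, ∑ j, pd j (fun y => V y i j) x = bilap (fun y => f y i) x) ∧
        (∀ i j, tsupport (fun x => V x i j) ⊆ tsupport f) ∧
        (∀ i j, (∫ x, V x i j) = 0) := by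
  set K := tsupport f with hKdef
  have hK : IsCompact K := hc
  let F : Fin d → SK K := fun i => ⟨fun y => f y i, contDiff_pi.1 hf i, by
    apply closure_mono
    intro x hx hx'
    apply hx
    simp [hx']⟩
  let D : SK K := ∑ k, PD K k (F k)
  have hd1 : (d : ℝ) - 1 ≠ 0 := by
    have : (2 : ℝ) ≤ d := by exact_mod_cast hd
    linarith
  let b : ℝ := -1 / (d - 1)
  let a : ℝ := -1 - b
  have hab : 2 + a + b * d = 0 := by
    simp only [a, b]; field_simp; ring
  let V : Fin d → Fin d → SK K := fun i j =>
    LP K (PD K i (F j) + PD K j (F i)) + a • PD K i (PD K j D)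
      + if i = j then b • LP K D else 0
  have hcomm : ∀ i j h, PD K i (PD K j h) = PD K j (PD K i h) := fun i j h =>
    LinearMap.congr_fun (PD_comm K i j) h
  have hL : ∀ j h, PD K j (LP K h) = LP K (PD K j h) := fun j h =>
    (LinearMap.congr_fun (LP_comm K j) h).symm
  have hLd : ∀ h, LP K h = ∑ i, PD K i (PD K i h) := fun h => by
    simp [LP, LinearMap.sum_apply]
  refine ⟨fun x i j => (V i j).1 x, fun i j => (V i j).2.1, ?_, ?_, ?_,
    fun i j => (V i j).2.2, ?_⟩
  · intro x i j
    have : V i j = V j i := by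
      simp only [V]
      rw [add_comm (PD K i (F j)), hcomm i j D]
      simp only [eq_comm]
    change (V i j).1 x = _
    rw [this]
  · intro x
    change ∑ i, (V i i).1 x = 0
    rw [← SK.coe_sum]
    have : ∑ i, V i i = 0 := by
      simp only [V, if_true, Finset.sum_add_distrib, ← map_sum, ← Finset.smul_sum, ← hLd]
      rw [Finset.sum_const, Finset.card_univ, Fintype.card_fin, ← Nat.cast_smul_eq_nsmul ℝ]
      change LP K (D + D) + _ + _ = 0
      rw [map_add]
      rw [map_smul]
      rw [show LP K D + LP K D + a • LP K D + b • (d : ℝ) • LP K D = (2 + a + b * d) • LP K D by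
        module, hab, zero_smul]
    rw [this]; rfl
  · intro x i
    change ∑ j, (PD K j (V i j)).1 x = lap (lap (F i).1) x
    rw [← LP_coe, ← LP_coe, ← SK.coe_sum]
    have : ∑ j, PD K j (V i j) = LP K (LP K (F i)) := by
      have e1 : ∑ j, LP K (PD K j (PD K i (F j))) = LP K (PD K i D) := by
        simp only [D, map_sum]
        exact Finset.sum_congr rfl fun j _ => by rw [hcomm]
      have e2 : ∑ j, PD K j (PD K i (PD K j D)) = LP K (PD K i D) := by
        rw [hLd]
        exact Finset.sum_congr rfl fun j _ => by rw [hcomm i j]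
      have e3 : ∑ j, PD K j (if i = j then b • LP K D else 0) = b • LP K (PD K i D) := by
        rw [Finset.sum_eq_single i]
        · simp [hL]
        · intro j _ hj; simp [hj.symm]
        · simp
      simp only [V, map_add, map_smul, Finset.sum_add_distrib, hL, ← Finset.smul_sum, e1, e2, e3]
      rw [← map_sum, ← hLd]
      simp only [a]; module
    rw [this]
  · intro i j
    change JJ hK (V i j) = 0
    simp only [V, map_add, map_smul, JJ_LP, JJ_PD]
    split_ifs <;> simp [JJ_LP]


open scoped FourierTransform

/-- Euclidean space -/
abbrev EE (d : ℕ) := EuclideanSpace ℝ (Fin d)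

/-- symbol of the derivative -/
def HH {d : ℕ} (k : EE d → ℂ) (ξ : EE d) : EE d →L[ℝ] ℂ :=
  (2 * Real.pi * Complex.I * k ξ) • (Complex.ofRealCLM.comp (innerSL ℝ ξ))

/-- regularised inverse Fourier integral -/
def WW {d : ℕ} (k : EE d → ℂ) (x : EE d) : ℂ :=
  ∫ ξ, (Complex.exp (↑(2 * Real.pi * inner ℝ ξ x) * Complex.I) - 1) * k ξ

lemma HH_norm {d : ℕ} (k : EE d → ℂ) (ξ : EE d) :
    ‖HH k ξ‖ ≤ 2 * Real.pi * (‖ξ‖ * ‖k ξ‖) := by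
  rw [HH, norm_smul]
  have h1 : ‖Complex.ofRealCLM.comp (innerSL ℝ ξ)‖ ≤ ‖ξ‖ := by
    apply ContinuousLinearMap.opNorm_le_bound _ (norm_nonneg _)
    intro x
    simp only [ContinuousLinearMap.comp_apply, Complex.ofRealCLM_apply, Complex.norm_real,
      innerSL_apply_apply]
    exact norm_inner_le_norm ξ x
  have h2 : ‖(2 * Real.pi * Complex.I * k ξ : ℂ)‖ = 2 * Real.pi * ‖k ξ‖ := by
    simp [abs_of_pos Real.pi_pos]
  rw [h2]
  calc _ ≤ 2 * Real.pi * ‖k ξ‖ * ‖ξ‖ := by gcongr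
    _ = _ := by ring

lemma HH_meas {d : ℕ} {k : EE d → ℂ} (hk : AEStronglyMeasurable k volume) :
    AEStronglyMeasurable (HH k) volume := by
  unfold HH
  apply AEStronglyMeasurable.fun_smul
  · exact hk.const_mul _
  · apply Continuous.aestronglyMeasurable
    fun_prop

lemma WW_hasFDerivAt {d : ℕ} {k : EE d → ℂ} (hk : AEStronglyMeasurable k volume)
    (hi : Integrable fun ξ => ‖ξ‖ * ‖k ξ‖) (x : EE d) :
    HasFDerivAt (WW k) (𝓕⁻ (HH k) x) x := by
  rw [Real.fourierInv_eq']
  have hm : ∀ x : EE d, AEStronglyMeasurable (fun ξ : EE d =>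
      (Complex.exp (↑(2 * Real.pi * inner ℝ ξ x) * Complex.I) - 1) * k ξ) volume := by
    intro x
    apply AEStronglyMeasurable.mul _ hk
    apply Continuous.aestronglyMeasurable
    fun_prop
  apply hasFDerivAt_integral_of_dominated_of_fderiv_le
    (F' := fun x ξ => Complex.exp (↑(2 * Real.pi * inner ℝ ξ x) * Complex.I) • HH k ξ)
    (bound := fun ξ => 2 * Real.pi * (‖ξ‖ * ‖k ξ‖)) (s := Set.univ) Filter.univ_mem
  · exact Filter.Eventually.of_forall hm
  · apply (hi.const_mul (2 * Real.pi * ‖x‖)).mono' (hm x)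
    refine Filter.Eventually.of_forall fun ξ => ?_
    rw [norm_mul, mul_comm _ Complex.I]
    calc _ ≤ ‖2 * Real.pi * inner ℝ ξ x‖ * ‖k ξ‖ := by
          gcongr; exact Real.norm_exp_I_mul_ofReal_sub_one_le
      _ ≤ (2 * Real.pi * (‖ξ‖ * ‖x‖)) * ‖k ξ‖ := by
          gcongr
          rw [norm_mul, Real.norm_of_nonneg (by positivity : 0 ≤ 2 * Real.pi)]
          gcongr
          exact norm_inner_le_norm ξ x
      _ = _ := by ring
  · apply AEStronglyMeasurable.fun_smul _ (HH_meas hk)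
    apply Continuous.aestronglyMeasurable
    fun_prop
  · refine Filter.Eventually.of_forall fun ξ x _ => ?_
    rw [norm_smul, Complex.norm_exp_ofReal_mul_I, one_mul]
    exact HH_norm k ξ
  · exact hi.const_mul _
  · refine Filter.Eventually.of_forall fun ξ x _ => ?_
    have h1 : HasFDerivAt (fun x : EE d => ((inner ℝ ξ x : ℝ) : ℂ))
        (Complex.ofRealCLM.comp (innerSL ℝ ξ)) x :=
      (Complex.ofRealCLM.comp (innerSL ℝ ξ)).hasFDerivAt
    have h2 := ((((h1.const_mul (2 * Real.pi : ℂ)).mul_const Complex.I).cexp).sub_const 1).mul_const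
      (k ξ)
    simp only [Complex.ofReal_mul, Complex.ofReal_ofNat]
    refine h2.congr_fderiv ?_
    ext v
    simp [HH]
    ring

lemma WW_contDiff {d : ℕ} {k : EE d → ℂ} (hk : AEStronglyMeasurable k volume)
    (hi : ∀ n : ℕ, Integrable fun ξ => ‖ξ‖ ^ n * (‖ξ‖ * ‖k ξ‖)) :
    ContDiff ℝ (⊤ : ℕ∞) (WW k) := by
  have hD := WW_hasFDerivAt hk (by simpa using hi 0)
  rw [contDiff_infty_iff_fderiv]
  refine ⟨fun x => (hD x).differentiableAt, ?_⟩
  have : fderiv ℝ (WW k) = fun x => 𝓕 (HH k) (-x) := by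
    funext x; rw [(hD x).fderiv, Real.fourierInv_eq_fourier_neg]
  rw [this]
  have := Real.contDiff_fourier (f := HH k) (N := ⊤) (fun n _ => by
    apply ((hi n).const_mul (2 * Real.pi)).mono'
    · exact (by fun_prop : Continuous fun v : EE d => ‖v‖ ^ n).aestronglyMeasurable.mul
        (HH_meas hk).norm
    · refine Filter.Eventually.of_forall fun ξ => ?_
      rw [Real.norm_of_nonneg (by positivity)]
      calc _ ≤ ‖ξ‖ ^ n * (2 * Real.pi * (‖ξ‖ * ‖k ξ‖)) := by
            gcongr; exact HH_norm k ξ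
        _ = _ := by ring)
  exact this.comp contDiff_neg

lemma WW_apply {d : ℕ} {k : EE d → ℂ} (hk : AEStronglyMeasurable k volume)
    (hi : Integrable fun ξ => ‖ξ‖ * ‖k ξ‖) (x v : EE d) :
    Integrable (fun ξ : EE d => Complex.exp (↑(2 * Real.pi * inner ℝ ξ x) * Complex.I) *
      (2 * Real.pi * Complex.I * inner ℝ ξ v * k ξ)) ∧
    𝓕⁻ (HH k) x v = ∫ ξ : EE d, Complex.exp (↑(2 * Real.pi * inner ℝ ξ x) * Complex.I) *
      (2 * Real.pi * Complex.I * inner ℝ ξ v * k ξ) := by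
  have hint : Integrable fun ξ : EE d =>
      Complex.exp (↑(2 * Real.pi * inner ℝ ξ x) * Complex.I) • HH k ξ := by
    apply (hi.const_mul (2 * Real.pi)).mono'
    · apply AEStronglyMeasurable.fun_smul _ (HH_meas hk)
      apply Continuous.aestronglyMeasurable
      fun_prop
    · refine Filter.Eventually.of_forall fun ξ => ?_
      rw [norm_smul, Complex.norm_exp_ofReal_mul_I, one_mul]
      exact HH_norm k ξ
  have heq : (fun ξ : EE d => Complex.exp (↑(2 * Real.pi * inner ℝ ξ x) * Complex.I) *
      (2 * Real.pi * Complex.I * inner ℝ ξ v * k ξ)) = fun ξ =>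
      (Complex.exp (↑(2 * Real.pi * inner ℝ ξ x) * Complex.I) • HH k ξ) v := by
    funext ξ
    simp [HH]
    ring
  rw [heq]
  constructor
  · exact (ContinuousLinearMap.apply ℝ ℂ v).integrable_comp hint
  · rw [Real.fourierInv_eq', ContinuousLinearMap.integral_apply hint]

/-- multiplier -/
def MM {d : ℕ} (a b : ℝ) (g : Fin d → EE d → ℂ) (i j : Fin d) (ξ : EE d) : ℂ :=
  (-Complex.I / (2 * Real.pi)) * (((‖ξ‖ ^ 4 : ℝ) : ℂ)⁻¹ *
    (((‖ξ‖ ^ 2 : ℝ) : ℂ) * (ξ i * g j ξ + ξ j * g i ξ) + a * (ξ i * ξ j * ∑ k, ξ k * g k ξ)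
      + (if i = j then (b : ℂ) else 0) * (((‖ξ‖ ^ 2 : ℝ) : ℂ) * ∑ k, ξ k * g k ξ)))

lemma EE_sq {d : ℕ} (ξ : EE d) : ∑ i, (ξ i : ℂ) * ξ i = ((‖ξ‖ ^ 2 : ℝ) : ℂ) := by
  rw [EuclideanSpace.real_norm_sq_eq]
  push_cast
  exact Finset.sum_congr rfl fun i _ => by ring

lemma MM_symm {d : ℕ} (a b : ℝ) (g : Fin d → EE d → ℂ) (i j : Fin d) (ξ : EE d) :
    MM a b g i j ξ = MM a b g j i ξ := by
  simp only [MM, eq_comm (a := i) (b := j)]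
  ring

lemma MM_trace {d : ℕ} (a b : ℝ) (hab : 2 + a + b * d = 0) (g : Fin d → EE d → ℂ) (ξ : EE d) :
    ∑ i, MM a b g i i ξ = 0 := by
  have hab' : (2 : ℂ) + a + b * d = 0 := by exact_mod_cast hab
  simp only [MM, if_true, ← Finset.mul_sum, Finset.sum_add_distrib, ← Finset.sum_mul]
  rw [EE_sq]
  simp only [Finset.sum_const, Finset.card_univ, Fintype.card_fin, nsmul_eq_mul]
  generalize ∑ k, (ξ k : ℂ) * g k ξ = D
  generalize ((‖ξ‖ ^ 2 : ℝ) : ℂ) = s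
  linear_combination (-Complex.I / (2 * Real.pi)) * ((((‖ξ‖ ^ 4 : ℝ) : ℂ)⁻¹ * (s * D))) * hab'

lemma MM_div {d : ℕ} (a b : ℝ) (hab : 1 + a + b = 0) (g : Fin d → EE d → ℂ) (i : Fin d) (ξ : EE d)
    (hξ : ξ ≠ 0) :
    ∑ j, 2 * Real.pi * Complex.I * ξ j * MM a b g i j ξ = g i ξ := by
  have hs : ((‖ξ‖ ^ 2 : ℝ) : ℂ) ≠ 0 := by
    norm_cast; positivity
  have h4 : ((‖ξ‖ ^ 4 : ℝ) : ℂ) = ((‖ξ‖ ^ 2 : ℝ) : ℂ) ^ 2 := by push_cast; ring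
  have hab' : (1 : ℂ) + a + b = 0 := by exact_mod_cast hab
  have hpi : (Real.pi : ℂ) ≠ 0 := by exact_mod_cast Real.pi_ne_zero
  have e := EE_sq ξ
  simp only [MM]
  rw [h4]
  generalize hD : ∑ k, (ξ k : ℂ) * g k ξ = D
  generalize ((‖ξ‖ ^ 2 : ℝ) : ℂ) = s at *
  have : ∀ j, 2 * Real.pi * Complex.I * ξ j * ((-Complex.I / (2 * Real.pi)) * ((s ^ 2)⁻¹ *
    (s * (ξ i * g j ξ + ξ j * g i ξ) + a * (ξ i * ξ j * D)
      + (if i = j then (b : ℂ) else 0) * (s * D)))) =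
      (s ^ 2)⁻¹ * ((s * ξ i) * (ξ j * g j ξ) + (s * g i ξ) * (ξ j * ξ j) + (a * ξ i * D) * (ξ j * ξ j)
        + (if i = j then (b * s * D * ξ j : ℂ) else 0)) := by
    intro j
    have : 2 * Real.pi * Complex.I * (-Complex.I / (2 * Real.pi)) = 1 := by
      field_simp; simp
    split_ifs
    · linear_combination (ξ j * ((s ^ 2)⁻¹ *
        (s * (ξ i * g j ξ + ξ j * g i ξ) + a * (ξ i * ξ j * D) + b * (s * D)))) * this
    · linear_combination (ξ j * ((s ^ 2)⁻¹ *
        (s * (ξ i * g j ξ + ξ j * g i ξ) + a * (ξ i * ξ j * D)))) * this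
  rw [Finset.sum_congr rfl fun j _ => this j]
  simp only [← Finset.mul_sum, Finset.sum_add_distrib, e, hD, Finset.sum_ite_eq, Finset.mem_univ,
    if_true]
  field_simp
  linear_combination (ξ i * D) * hab'

lemma MM_bound {d : ℕ} (a b : ℝ) (g : Fin d → EE d → ℂ) (i j : Fin d) (ξ : EE d) :
    ‖ξ‖ * ‖MM a b g i j ξ‖ ≤ (2 + |a| + |b|) * ∑ k, ‖g k ξ‖ := by
  by_cases hξ : ξ = 0
  · simp only [hξ, norm_zero, zero_mul]; positivity
  have hpos : 0 < ‖ξ‖ := norm_pos_iff.2 hξ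
  set G := ∑ k, ‖g k ξ‖ with hG
  set r := ‖ξ‖
  have hG0 : 0 ≤ G := by positivity
  have hc : ∀ i, ‖(ξ i : ℂ)‖ ≤ r := fun i => by
    rw [Complex.norm_real]; exact PiLp.norm_apply_le ξ i
  have hg : ∀ i, ‖g i ξ‖ ≤ G := fun i =>
    Finset.single_le_sum (f := fun k => ‖g k ξ‖) (fun _ _ => norm_nonneg _) (Finset.mem_univ i)
  have hD : ‖∑ k, (ξ k : ℂ) * g k ξ‖ ≤ r * G := by
    rw [hG, Finset.mul_sum]
    refine (norm_sum_le _ _).trans (Finset.sum_le_sum fun k _ => ?_)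
    rw [norm_mul]; gcongr; exact hc k
  have hr : ∀ n : ℕ, ‖((r ^ n : ℝ) : ℂ)‖ = r ^ n := fun n => by
    rw [Complex.norm_real, Real.norm_of_nonneg (by positivity)]
  have hb : ‖(if i = j then (b : ℂ) else 0)‖ ≤ |b| := by
    split_ifs <;> simp
  have hm : ∀ i j, ‖(ξ i : ℂ) * g j ξ‖ ≤ r * G := fun i j => by
    rw [norm_mul]; gcongr; exacts [hc i, hg j]
  have t1 : ‖((r ^ 2 : ℝ) : ℂ) * (ξ i * g j ξ + ξ j * g i ξ)‖ ≤ 2 * (r ^ 3 * G) := by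
    rw [norm_mul, hr]
    calc _ ≤ r ^ 2 * (r * G + r * G) := by
          gcongr; exact (norm_add_le _ _).trans (add_le_add (hm i j) (hm j i))
      _ = _ := by ring
  have t2 : ‖(a : ℂ) * (ξ i * ξ j * ∑ k, (ξ k : ℂ) * g k ξ)‖ ≤ |a| * (r ^ 3 * G) := by
    rw [norm_mul, norm_mul, norm_mul, Complex.norm_real, Real.norm_eq_abs]
    calc _ ≤ |a| * (r * r * (r * G)) := by
          gcongr; exacts [hc i, hc j]
      _ = _ := by ring
  have t3 : ‖(if i = j then (b : ℂ) else 0) * (((r ^ 2 : ℝ) : ℂ) * ∑ k, (ξ k : ℂ) * g k ξ)‖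
      ≤ |b| * (r ^ 3 * G) := by
    rw [norm_mul, norm_mul, hr]
    calc _ ≤ |b| * (r ^ 2 * (r * G)) := by gcongr
      _ = _ := by ring
  have hp : ‖(-Complex.I / (2 * Real.pi) : ℂ)‖ ≤ 1 := by
    have := Real.pi_gt_three
    rw [norm_div, norm_neg, Complex.norm_I, norm_mul, Complex.norm_real,
      Real.norm_of_nonneg Real.pi_pos.le, Complex.norm_ofNat]
    rw [div_le_one (by positivity)]
    linarith
  have hsum := (norm_add_le _ _).trans (add_le_add ((norm_add_le _ _).trans (add_le_add t1 t2)) t3)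
  rw [MM, norm_mul, norm_mul, norm_inv, hr]
  calc _ ≤ r * (1 * ((r ^ 4)⁻¹ * (2 * (r ^ 3 * G) + |a| * (r ^ 3 * G) + |b| * (r ^ 3 * G)))) := by
        gcongr
    _ = _ := by field_simp

lemma MM_meas {d : ℕ} (a b : ℝ) (g : Fin d → EE d → ℂ) (hg : ∀ i, Continuous (g i))
    (i j : Fin d) : AEStronglyMeasurable (MM a b g i j) volume := by
  have h : Measurable fun ξ : EE d => (((‖ξ‖ ^ 4 : ℝ) : ℂ)⁻¹) := by fun_prop
  unfold MM
  apply AEStronglyMeasurable.const_mul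
  apply h.aestronglyMeasurable.mul
  apply Continuous.aestronglyMeasurable
  fun_prop

lemma part1 (d : ℕ) (hd : 2 ≤ d) (f : Vec d → Vec d) (hf : ContDiff ℝ (⊤ : ℕ∞) f)
    (hc : HasCompactSupport f) :
      ∃ U : Vec d → Mat d,
        (∀ i j, ContDiff ℝ (⊤ : ℕ∞) (fun x => U x i j)) ∧
        (∀ x i j, U x i j = U x j i) ∧
        (∀ x, ∑ i, U x i i = 0) ∧
        (∀ x i, ∑ j, pd j (fun y => U y i j) x = f x i) := by
  have hd1 : (d : ℝ) - 1 ≠ 0 := by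
    have : (2 : ℝ) ≤ d := by exact_mod_cast hd
    linarith
  obtain ⟨a, b, hab, hab2⟩ : ∃ a b : ℝ, 1 + a + b = 0 ∧ 2 + a + b * d = 0 :=
    ⟨-1 - (-1 / (d - 1)), -1 / (d - 1), by ring, by field_simp; ring⟩
  let T : Vec d ≃L[ℝ] EE d := (EuclideanSpace.equiv (Fin d) ℝ).symm
  let φ : Fin d → EE d → ℂ := fun i y => (f (T.symm y) i : ℂ)
  have hφs : ∀ i, ContDiff ℝ (⊤ : ℕ∞) (φ i) := fun i =>
    Complex.ofRealCLM.contDiff.comp ((contDiff_pi.1 hf i).comp T.symm.contDiff)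
  have hφc : ∀ i, HasCompactSupport (φ i) := fun i => by
    have h1 : HasCompactSupport (f ∘ T.symm) := hc.comp_homeomorph T.symm.toHomeomorph
    exact h1.comp_left (g := fun v : Vec d => (v i : ℂ)) (by simp)
  let S : Fin d → SchwartzMap (EE d) ℂ := fun i => (hφc i).toSchwartzMap (hφs i)
  let g : Fin d → EE d → ℂ := fun i => (𝓕 (S i) : SchwartzMap (EE d) ℂ)
  have hgc : ∀ i, Continuous (g i) := fun i => (𝓕 (S i) : SchwartzMap (EE d) ℂ).continuous
  have hgi : ∀ i (n : ℕ), Integrable fun ξ : EE d => ‖ξ‖ ^ n * ‖g i ξ‖ := fun i n =>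
    (𝓕 (S i) : SchwartzMap (EE d) ℂ).integrable_pow_mul volume n
  have hinv : ∀ i x, ∫ ξ : EE d, Complex.exp (↑(2 * Real.pi * inner ℝ ξ x) * Complex.I) * g i ξ
      = φ i x := by
    intro i x
    have h1 : (𝓕⁻ (𝓕 (S i)) : SchwartzMap (EE d) ℂ) = S i :=
      FourierTransform.fourierInv_fourier_eq _
    have h2 : (𝓕⁻ (𝓕 (S i)) : SchwartzMap (EE d) ℂ) x = φ i x := by rw [h1]; rfl
    rw [SchwartzMap.fourierInv_coe, Real.fourierInv_eq'] at h2
    exact h2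
  let m := MM a b g
  have hm : ∀ i j, AEStronglyMeasurable (m i j) volume := MM_meas a b g hgc
  have hmi : ∀ i j (n : ℕ), Integrable fun ξ => ‖ξ‖ ^ n * (‖ξ‖ * ‖m i j ξ‖) := by
    intro i j n
    have h1 : Integrable fun ξ : EE d => (2 + |a| + |b|) * ∑ k, ‖ξ‖ ^ n * ‖g k ξ‖ :=
      (integrable_finsetSum _ fun k _ => hgi k n).const_mul _
    apply h1.mono'
    · apply Continuous.aestronglyMeasurable (by fun_prop) |>.mul
      exact (continuous_norm.aestronglyMeasurable).mul (hm i j).norm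
    · refine Filter.Eventually.of_forall fun ξ => ?_
      rw [Real.norm_of_nonneg (by positivity), ← Finset.mul_sum]
      calc _ ≤ ‖ξ‖ ^ n * ((2 + |a| + |b|) * ∑ k, ‖g k ξ‖) := by
            exact mul_le_mul_of_nonneg_left (MM_bound a b g i j ξ) (by positivity)
        _ = _ := by ring
  have hmi0 : ∀ i j, Integrable fun ξ => ‖ξ‖ * ‖m i j ξ‖ := fun i j => by simpa using hmi i j 0
  have hWi : ∀ i j (x : EE d), Integrable fun ξ : EE d =>
      (Complex.exp (↑(2 * Real.pi * inner ℝ ξ x) * Complex.I) - 1) * m i j ξ := by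
    intro i j x
    apply ((hmi0 i j).const_mul (2 * Real.pi * ‖x‖)).mono'
    · apply AEStronglyMeasurable.mul _ (hm i j)
      apply Continuous.aestronglyMeasurable
      fun_prop
    refine Filter.Eventually.of_forall fun ξ => ?_
    rw [norm_mul, mul_comm _ Complex.I]
    calc _ ≤ ‖2 * Real.pi * inner ℝ ξ x‖ * ‖m i j ξ‖ := by
          gcongr; exact Real.norm_exp_I_mul_ofReal_sub_one_le
      _ ≤ (2 * Real.pi * (‖ξ‖ * ‖x‖)) * ‖m i j ξ‖ := by
          gcongr
          rw [norm_mul, Real.norm_of_nonneg (by positivity : 0 ≤ 2 * Real.pi)]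
          gcongr
          exact norm_inner_le_norm ξ x
      _ = _ := by ring
  refine ⟨fun x i j => (WW (m i j) (T x)).re, ?_, ?_, ?_, ?_⟩
  · intro i j
    exact Complex.reCLM.contDiff.comp ((WW_contDiff (hm i j) (hmi i j)).comp T.contDiff)
  · intro x i j
    have : m i j = m j i := funext fun ξ => MM_symm a b g i j ξ
    simp only [this]
  · intro x
    rw [← Complex.re_sum]
    have : ∑ i, WW (m i i) (T x) = 0 := by
      unfold WW
      rw [← integral_finsetSum _ fun i _ => hWi i i (T x)]
      simp only [← Finset.mul_sum, m, MM_trace a b hab2]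
      simp
    rw [this]; rfl
  · intro x i
    have h1 : ∀ j, pd j (fun y => (WW (m i j) (T y)).re) x
        = (𝓕⁻ (HH (m i j)) (T x) (T (Pi.single j 1))).re := by
      intro j
      have h := Complex.reCLM.hasFDerivAt.comp x
        ((WW_hasFDerivAt (hm i j) (hmi0 i j) (T x)).comp x T.hasFDerivAt)
      have h' : HasFDerivAt (fun y => (WW (m i j) (T y)).re) _ x := h
      rw [pd, h'.fderiv]
      rfl
    rw [Finset.sum_congr rfl fun j _ => h1 j, ← Complex.re_sum]
    have h2 : ∑ j, 𝓕⁻ (HH (m i j)) (T x) (T (Pi.single j 1)) = φ i (T x) := by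
      rw [Finset.sum_congr rfl fun j _ => (WW_apply (hm i j) (hmi0 i j) (T x) _).2,
        ← integral_finsetSum _ fun j _ => (WW_apply (hm i j) (hmi0 i j) (T x) _).1, ← hinv]
      apply integral_congr_ae
      have : Nonempty (Fin d) := ⟨i⟩
      have hne : ∀ᵐ ξ : EE d, ξ ≠ 0 := by
        simp [ae_iff]
      filter_upwards [hne] with ξ hξ
      rw [← Finset.mul_sum, ← MM_div a b hab g i ξ hξ]
      congr 1
      refine Finset.sum_congr rfl fun j _ => ?_
      have : inner ℝ ξ (T (Pi.single j 1)) = ξ j := by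
        have : T (Pi.single j 1) = EuclideanSpace.single j (1 : ℝ) := rfl
        rw [this, EuclideanSpace.inner_single_right]; simp
      rw [this]
    rw [h2]
    simp [φ]

/-- **Lemma 3.2.** Let `d ≥ 2`.
(i) For every `f ∈ C_c^∞(ℝ^d; ℝ^d)` there is a smooth symmetric trace-free matrix field `U`
with `div U = f`.
(ii) Moreover, there is a smooth symmetric trace-free matrix field `V` with `div V = Δ²f`,
`supp V ⊆ supp f` and `∫ V = 0`. -/
theorem stmt3 (d : ℕ) (hd : 2 ≤ d) :
    (∀ f : Vec d → Vec d, ContDiff ℝ (⊤ : ℕ∞) f → HasCompactSupport f →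
      ∃ U : Vec d → Mat d,
        (∀ i j, ContDiff ℝ (⊤ : ℕ∞) (fun x => U x i j)) ∧
        (∀ x i j, U x i j = U x j i) ∧
        (∀ x, ∑ i, U x i i = 0) ∧
        (∀ x i, ∑ j, pd j (fun y => U y i j) x = f x i)) ∧
    (∀ f : Vec d → Vec d, ContDiff ℝ (⊤ : ℕ∞) f → HasCompactSupport f →
      ∃ V : Vec d → Mat d,
        (∀ i j, ContDiff ℝ (⊤ : ℕ∞) (fun x => V x i j)) ∧
        (∀ x i j, V x i j = V x j i) ∧
        (∀ x, ∑ i, V x i i = 0) ∧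
        (∀ x i, ∑ j, pd j (fun y => V y i j) x = bilap (fun y => f y i) x) ∧
        (∀ i j, tsupport (fun x => V x i j) ⊆ tsupport f) ∧
        (∀ i j, (∫ x, V x i j) = 0)) := by
  exact ⟨fun f hf hc => part1 d hd f hf hc, fun f hf hc => part2 d hd f hf hc⟩
end
end

section
/- Let d ≥ 2 and r > 0. There exists a constant C = C(d,r) > 0 such that for every w = (v, U) in the interior of K_r^co there exists w̄ = (v̄, Ū) ∈ ℝ^d × S₀^{d×d} with the following properties: (i) w̄ = λ·((a, a⊗a) − (b, b⊗b)) for some λ > 0 and some a, b ∈ ℝ^d with |a|² = |b|² = r and b ≠ ±a; (ii) the closed segment σ = [w − w̄, w + w̄] is contained in the interior of K_r^co; (iii) |v̄| ≥ C(r − |v|²); (iv) dist(σ, ∂K_r^co) ≥ (1/2)·dist(w, ∂K_r^co). -/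
open MeasureTheory

noncomputable section

/-- The space S₀^{d×d} of symmetric trace-free d×d matrices, as a submodule. -/
def S0 (d : ℕ) : Submodule ℝ (Mat d) where
  carrier := {U | (∀ i j, U i j = U j i) ∧ ∑ i, U i i = 0}
  add_mem' := by
    rintro U V ⟨hU1, hU2⟩ ⟨hV1, hV2⟩
    refine ⟨fun i j => by simp [hU1 i j, hV1 i j], ?_⟩
    simp [Finset.sum_add_distrib, hU2, hV2]
  zero_mem' := ⟨fun i j => rfl, by simp⟩
  smul_mem' := by
    rintro c U ⟨hU1, hU2⟩
    refine ⟨fun i j => by simp [hU1 i j], ?_⟩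
    simp [← Finset.mul_sum, hU2]

/-- The wave cone Λ: states `(v̄, Ū)` with `v̄ ≠ 0` for which there are `q̄ ∈ ℝ` and
`ξ ≠ 0` with `Ū ξ + q̄ ξ = 0` and `v̄ · ξ = 0`. -/
def Lam (d : ℕ) : Set (Vec d × S0 d) :=
  {w | w.1 ≠ 0 ∧ ∃ (q : ℝ) (ξ : Vec d), ξ ≠ 0 ∧
    (∀ i, (∑ j, (w.2 : Mat d) i j * ξ j) + q * ξ i = 0) ∧ (∑ i, w.1 i * ξ i = 0)}

/-- The constraint set `K_r = {(v, U) : U = v ⊗ v − (r/d)·I_d}` inside ℝ^d × S₀^{d×d}.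
(Note that trace-freeness of `U` forces `|v|² = r` on `K_r`.) -/
def Kset (d : ℕ) (r : ℝ) : Set (Vec d × S0 d) :=
  {w | ∀ i j, (w.2 : Mat d) i j = w.1 i * w.1 j - (r / d) * (if i = j then 1 else 0)}


lemma exists_perp {d : ℕ} (hd : 2 ≤ d) {r : ℝ} (hr : 0 < r) (a : Vec d) (ha : ∑ i, (a i)^2 = r) :
    ∃ z : Vec d, ∑ i, (z i)^2 = r ∧ ∑ i, a i * z i = 0 := by
  obtain ⟨i, hi⟩ : ∃ i, a i ≠ 0 := by
    by_contra! h
    simp [h] at ha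
    exact hr.ne ha
  have : Nontrivial (Fin d) := Fin.nontrivial_iff_two_le.2 hd
  obtain ⟨j, hj⟩ := exists_ne i
  set q : ℝ := a i ^ 2 + a j ^ 2 with hq
  have hq0 : 0 < q := by positivity
  set s := Real.sqrt (r / q)
  have hs : s ^ 2 = r / q := Real.sq_sqrt (by positivity)
  have key : ∀ f : Fin d → ℝ → ℝ, (∀ k, f k 0 = 0) →
      ∑ k, f k (if k = i then s * a j else if k = j then - s * a i else 0)
        = f i (s * a j) + f j (- s * a i) := by
    intro f hf
    rw [Finset.sum_eq_add i j hj.symm]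
    · simp [hj]
    · intro k _ hk
      simp [hk.1, hk.2, hf]
    · simp
    · simp
  refine ⟨fun k => if k = i then s * a j else if k = j then - s * a i else 0, ?_, ?_⟩
  · rw [key (fun _ x => x ^ 2) (by simp)]
    have : (s * a j) ^ 2 + (-s * a i) ^ 2 = s ^ 2 * q := by rw [hq]; ring
    rw [this, hs]; field_simp
  · rw [key (fun k x => a k * x) (by simp)]
    ring

lemma exists_near {d : ℕ} (hd : 2 ≤ d) {r : ℝ} (hr : 0 < r) (a b : Vec d)
    (ha : ∑ i, (a i)^2 = r) (hb : ∑ i, (b i)^2 = r) (hba : b ≠ a)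
    (P : Vec d → Prop) (hP : ∀ᶠ c in nhds b, P c) :
    ∃ c : Vec d, ∑ i, (c i)^2 = r ∧ c ≠ a ∧ c ≠ -a ∧ P c := by
  by_cases h : b = -a
  · obtain ⟨z, hz, haz⟩ := exists_perp hd hr a ha
    let c : ℝ → Vec d := fun t => fun i => -Real.cos t * a i + Real.sin t * z i
    have hc : Continuous c := by
      unfold c; fun_prop
    have hc0 : c 0 = b := by
      ext i; simp [c, h]
    have h1 : ∀ᶠ t in nhds (0:ℝ), P (c t) := by
      have := hc.tendsto 0
      rw [hc0] at this
      exact this.eventually hP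
    obtain ⟨δ, hδ, hδP⟩ := Metric.eventually_nhds_iff.1 h1
    set t := min (δ / 2) 1 with ht
    have ht0 : 0 < t := by positivity
    have htδ : t < δ := lt_of_le_of_lt (min_le_left _ _) (by linarith)
    have hsin : 0 < Real.sin t := Real.sin_pos_of_pos_of_lt_pi ht0
      (lt_of_le_of_lt (min_le_right _ _) (by linarith [Real.pi_gt_three]))
    have hin : ∑ i, c t i * z i = Real.sin t * r := by
      have : ∀ i, c t i * z i = -Real.cos t * (a i * z i) + Real.sin t * (z i)^2 := by
        intro i; simp only [c]; ring
      simp_rw [this]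
      rw [Finset.sum_add_distrib, ← Finset.mul_sum, ← Finset.mul_sum, haz, hz]; ring
    have hin0 : ∑ i, c t i * z i ≠ 0 := by rw [hin]; positivity
    refine ⟨c t, ?_, ?_, ?_, hδP ?_⟩
    · have : ∀ i, c t i ^ 2 = Real.cos t ^ 2 * (a i)^2 + Real.sin t ^ 2 * (z i)^2
          + (-2 * Real.cos t * Real.sin t) * (a i * z i) := by
        intro i; simp only [c]; ring
      simp_rw [this]
      rw [Finset.sum_add_distrib, Finset.sum_add_distrib, ← Finset.mul_sum, ← Finset.mul_sum,
        ← Finset.mul_sum, haz, hz, ha]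
      linear_combination r * Real.sin_sq_add_cos_sq t
    · intro h; rw [h] at hin0; exact hin0 haz
    · intro h; rw [h] at hin0; apply hin0; simp [haz]
    · simp [abs_of_pos ht0, htδ]
  · exact ⟨b, hb, hba, h, hP.self_of_nhds⟩

/-- The lift of a vector. -/
def Phi (d : ℕ) (hd : d ≠ 0) (c : Vec d) : Vec d × S0 d :=
  (c, ⟨fun i j => c i * c j - ((∑ k, c k ^ 2) / d) * (if i = j then 1 else 0), by
    refine ⟨fun i j => by simp only [mul_comm (c i), eq_comm], ?_⟩
    have : (d : ℝ) ≠ 0 := by exact_mod_cast hd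
    simp [Finset.sum_sub_distrib, ← sq]
    field_simp
    ring⟩)

lemma Phi_cont (d : ℕ) (hd : d ≠ 0) : Continuous (Phi d hd) := by
  unfold Phi
  refine continuous_id.prodMk (Continuous.subtype_mk ?_ _)
  fun_prop

lemma Kset_norm {d : ℕ} (hd : d ≠ 0) {r : ℝ} {w : Vec d × S0 d} (hw : w ∈ Kset d r) :
    ∑ i, (w.1 i)^2 = r := by
  have h := w.2.2.2
  have hd' : (d : ℝ) ≠ 0 := by exact_mod_cast hd
  have h2 : ∀ i, (w.2 : Mat d) i i = (w.1 i)^2 - r / d := by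
    intro i; rw [hw i i]; simp [sq]
  simp_rw [h2] at h
  rw [Finset.sum_sub_distrib] at h
  simp at h
  field_simp at h
  linarith

lemma Kset_eq {d : ℕ} (hd : d ≠ 0) {r : ℝ} {w : Vec d × S0 d} (hw : w ∈ Kset d r) :
    Phi d hd w.1 = w := by
  refine Prod.ext rfl (Subtype.ext ?_)
  funext i j
  rw [hw i j, ← Kset_norm hd hw]
  rfl

lemma ball_geom {E : Type*} [NormedAddCommGroup E] [NormedSpace ℝ E] {S : Set E}
    (hS : Convex ℝ S) {w D e : E} {R : ℝ} (hR : Metric.ball w R ⊆ S)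
    (h1 : w + D ∈ S) (h2 : w - D ∈ S) (he : ‖e‖ ≤ R / 4) {u : E}
    (hu : u ∈ segment ℝ (w - ((1/4:ℝ) • D + e)) (w + ((1/4:ℝ) • D + e))) :
    Metric.ball u (R/2) ⊆ S := by
  obtain ⟨p, q, hp, hq, hpq, rfl⟩ := hu
  intro x hx
  have hA : p • (w - D) + q • (w + D) ∈ S := hS h2 h1 hp hq hpq
  set f := x - (p • (w - ((1/4:ℝ) • D + e)) + q • (w + ((1/4:ℝ) • D + e))) with hf
  have hfn : ‖f‖ < R/2 := by rwa [mem_ball_iff_norm] at hx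
  have hB : w + (4/3:ℝ) • ((q - p) • e + f) ∈ S := by
    apply hR
    rw [mem_ball_iff_norm, add_sub_cancel_left, norm_smul]
    have : ‖(q - p) • e‖ ≤ R / 4 := by
      rw [norm_smul]
      have : ‖q - p‖ ≤ 1 := by rw [Real.norm_eq_abs, abs_le]; constructor <;> linarith
      calc _ ≤ 1 * ‖e‖ := by gcongr
        _ ≤ _ := by linarith
    have h3 := norm_add_le ((q - p) • e) f
    rw [Real.norm_of_nonneg (by norm_num)]
    linarith
  have := hS hA hB (a := 1/4) (b := 3/4) (by norm_num) (by norm_num) (by norm_num)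
  convert this using 1
  have hx' : x = f + (p • (w - ((1/4:ℝ) • D + e)) + q • (w + ((1/4:ℝ) • D + e))) := by
    rw [hf]; abel
  have hq' : q = 1 - p := by linarith
  rw [hx', hq']
  module

lemma shift_mem {E ι : Type*} [AddCommGroup E] [Module ℝ E] [Fintype ι] {S : Set E}
    (hS : Convex ℝ S) (z : ι → E) (l : ι → ℝ) (hz : ∀ i, z i ∈ S) (hl : ∀ i, 0 < l i)
    (hsum : ∑ i, l i = 1) (k j : ι) (hkj : l j ≤ l k) (s : ℝ) (hs : |s| ≤ l j) :
    (∑ i, l i • z i) + s • (z k - z j) ∈ S := by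
  classical
  have hs' := abs_le.1 hs
  have := hS.sum_mem (t := Finset.univ)
    (w := fun i => l i + s * ((if i = k then 1 else 0) - (if i = j then 1 else 0))) (z := z)
    ?_ ?_ (fun i _ => hz i)
  · convert this using 1
    simp only [add_smul, mul_sub, sub_smul, Finset.sum_add_distrib, Finset.sum_sub_distrib]
    simp [smul_sub]
  · intro i _
    have := hl i
    split_ifs with h1 h2 h2
    · linarith
    · subst h1; linarith
    · subst h2; linarith
    · linarith
  · simp [Finset.sum_add_distrib, ← Finset.mul_sum, hsum]

lemma shift_mem_sub {E ι : Type*} [AddCommGroup E] [Module ℝ E] [Fintype ι] {S : Set E}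
    (hS : Convex ℝ S) (z : ι → E) (l : ι → ℝ) (hz : ∀ i, z i ∈ S) (hl : ∀ i, 0 < l i)
    (hsum : ∑ i, l i = 1) (k j : ι) (hkj : l j ≤ l k) :
    (∑ i, l i • z i) - l j • (z k - z j) ∈ S := by
  rw [sub_eq_add_neg, ← neg_smul]
  exact shift_mem hS z l hz hl hsum k j hkj _ (by rw [abs_neg, abs_of_pos (hl j)])

lemma cont_aux {X E : Type*} [TopologicalSpace X] [NormedAddCommGroup E] [NormedSpace ℝ E]
    (f : X → E) (hf : Continuous f) (s : ℝ) (x : X) {R : ℝ} (hR : 0 < R) :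
    ∀ᶠ c in nhds x, ‖s • (f x - f c)‖ < R := by
  have hcont : Continuous fun c => ‖s • (f x - f c)‖ := by fun_prop
  refine (hcont.tendsto x).eventually_lt_const ?_
  simpa using hR

lemma dec_aux {E : Type*} [AddCommGroup E] [Module ℝ E] (a b c : E) (s : ℝ) :
    (s / 4) • (a - c) = (1/4:ℝ) • (s • (a - b)) + (s / 4) • (b - c) := by
  module

lemma ball_frontier {E : Type*} [NormedAddCommGroup E] [NormedSpace ℝ E] {S : Set E} {w : E}
    (hw : w ∈ interior S) :
    ∃ R, 0 < R ∧ Metric.infDist w (frontier S) ≤ R ∧ Metric.ball w R ⊆ S := by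
  rcases (Metric.infDist_nonneg (x := w) (s := frontier S)).lt_or_eq with h | h
  · refine ⟨_, h, le_rfl, ?_⟩
    refine subset_trans ?_ (interior_subset (s := S))
    refine ((convex_ball w _).isPreconnected).subset_left_of_subset_union isOpen_interior
      (isClosed_closure (s := S)).isOpen_compl ?_ ?_ ⟨w, Metric.mem_ball_self h, hw⟩
    · exact Set.disjoint_compl_right_iff_subset.2 (interior_subset.trans subset_closure)
    · intro x hx
      by_contra hcon
      simp only [Set.mem_union, Set.mem_compl_iff, not_or, not_not] at hcon
      have hxf : x ∈ frontier S := ⟨hcon.2, hcon.1⟩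
      have := Metric.infDist_le_dist_of_mem (x := w) hxf
      rw [Metric.mem_ball, dist_comm] at hx
      linarith
  · obtain ⟨R, hR, hb⟩ := Metric.isOpen_iff.1 isOpen_interior w hw
    exact ⟨R, hR, by linarith, hb.trans interior_subset⟩

/-- Euclidean norm. -/
def nn {d : ℕ} (v : Vec d) : ℝ := Real.sqrt (∑ i, (v i)^2)

lemma nn_eq {d : ℕ} (v : Vec d) : nn v = ‖(WithLp.toLp 2 v : EuclideanSpace ℝ (Fin d))‖ := by
  simp [nn, EuclideanSpace.norm_eq]

lemma nn_sum {d : ℕ} {ι : Type*} [Fintype ι] (f : ι → Vec d) : nn (∑ i, f i) ≤ ∑ i, nn (f i) := by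
  simp only [nn_eq]
  rw [WithLp.toLp_sum]
  exact norm_sum_le _ _

lemma nn_smul {d : ℕ} {c : ℝ} (hc : 0 ≤ c) (v : Vec d) : nn (c • v) = c * nn v := by
  rw [nn_eq, nn_eq, WithLp.toLp_smul, norm_smul, Real.norm_of_nonneg hc]

lemma nn_sub_comm {d : ℕ} (v w : Vec d) : nn (v - w) = nn (w - v) := by
  rw [nn_eq, nn_eq, WithLp.toLp_sub, WithLp.toLp_sub, norm_sub_rev]

lemma nn_tri {d : ℕ} (v w : Vec d) : nn v ≤ nn w + nn (v - w) := by
  rw [nn_eq, nn_eq, nn_eq, WithLp.toLp_sub]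
  exact norm_le_norm_add_norm_sub' _ _

lemma nn_pos {d : ℕ} {v : Vec d} (h : v ≠ 0) : 0 < nn v := by
  rw [nn_eq, norm_pos_iff]
  simpa using h

lemma nn_cont {d : ℕ} : Continuous (nn : Vec d → ℝ) := by
  unfold nn; fun_prop

lemma nn_sq {d : ℕ} (v : Vec d) : nn v ^ 2 = ∑ i, (v i)^2 :=
  Real.sq_sqrt (Finset.sum_nonneg fun _ _ => sq_nonneg _)

lemma hull_norm {d : ℕ} (hd : d ≠ 0) {r : ℝ} {w : Vec d × S0 d}
    (hw : w ∈ convexHull ℝ (Kset d r)) : ∑ i, (w.1 i)^2 ≤ r := by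
  have hc : Convex ℝ {w : Vec d × S0 d | ∑ i, (w.1 i)^2 ≤ r} := by
    intro x hx y hy p q hp hq hpq
    simp only [Set.mem_ofPred_eq] at *
    calc ∑ i, ((p • x + q • y).1 i)^2 ≤ ∑ i, (p * (x.1 i)^2 + q * (y.1 i)^2) := by
          apply Finset.sum_le_sum
          intro i _
          have hq' : q = 1 - p := by linarith
          simp only [Prod.fst_add, Prod.smul_fst, Pi.add_apply, Pi.smul_apply, smul_eq_mul]
          have : 0 ≤ p * q * (x.1 i - y.1 i)^2 := by positivity
          subst hq'
          nlinarith
      _ = p * ∑ i, (x.1 i)^2 + q * ∑ i, (y.1 i)^2 := by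
          rw [Finset.sum_add_distrib, Finset.mul_sum, Finset.mul_sum]
      _ ≤ p * r + q * r := by gcongr
      _ = r := by rw [← add_mul, hpq, one_mul]
  exact convexHull_min (fun w hw => (Kset_norm hd hw).le) hc hw

lemma int_norm {d : ℕ} (hd : d ≠ 0) {r : ℝ} (hr : 0 < r) {w : Vec d × S0 d}
    (hw : w ∈ interior (convexHull ℝ (Kset d r))) : ∑ i, (w.1 i)^2 < r := by
  have hcont : Continuous fun t : ℝ => w + t • ((w.1, 0) : Vec d × S0 d) := by fun_prop
  have h1 : ∀ᶠ t in nhds (0:ℝ), w + t • ((w.1, 0) : Vec d × S0 d) ∈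
      interior (convexHull ℝ (Kset d r)) := by
    have := hcont.tendsto 0
    apply this.eventually_mem
    apply isOpen_interior.mem_nhds
    simpa using hw
  obtain ⟨δ, hδ, hδP⟩ := Metric.eventually_nhds_iff.1 h1
  have h2 := hull_norm hd (interior_subset (hδP (y := δ/2) (by
    simp [abs_of_pos hδ]; linarith)))
  have h3 : ∑ i, ((w + (δ/2) • ((w.1, 0) : Vec d × S0 d)).1 i)^2
      = (1 + δ/2)^2 * ∑ i, (w.1 i)^2 := by
    rw [Finset.mul_sum]
    refine Finset.sum_congr rfl fun i _ => ?_
    simp only [Prod.fst_add, Prod.smul_fst, Pi.add_apply, Pi.smul_apply, smul_eq_mul]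
    ring
  rw [h3] at h2
  have h4 : 0 ≤ ∑ i, (w.1 i)^2 := Finset.sum_nonneg fun _ _ => sq_nonneg _
  by_contra! h
  nlinarith [mul_pos hr hδ, mul_nonneg h4 (sq_nonneg δ), mul_le_mul_of_nonneg_left h hδ.le]

set_option maxHeartbeats 1600000 in
/-- **Lemma 4.1.** Let `d ≥ 2`, `r > 0`. There is `C = C(d,r) > 0` such that
for every `w = (v, U)` in the interior of `K_r^co` there is `w̄ = (v̄, Ū)` such that:
(i) `w̄ = λ((a, a⊗a) − (b, b⊗b))` with `λ > 0`, `|a|² = |b|² = r`, `b ≠ ±a`;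
(ii) the segment `σ = [w − w̄, w + w̄]` lies in the interior of `K_r^co`;
(iii) `|v̄| ≥ C (r − |v|²)`;
(iv) `dist(σ, ∂K_r^co) ≥ (1/2) dist(w, ∂K_r^co)`. -/
theorem stmt6 (d : ℕ) (hd : 2 ≤ d) (r : ℝ) (hr : 0 < r) :
    ∃ C : ℝ, 0 < C ∧
      ∀ w : Vec d × S0 d, w ∈ interior (convexHull ℝ (Kset d r)) →
        ∃ (wb : Vec d × S0 d) (lam : ℝ) (a b : Vec d),
          0 < lam ∧
          (∑ i, (a i) ^ 2 = r) ∧ (∑ i, (b i) ^ 2 = r) ∧ b ≠ a ∧ b ≠ -a ∧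
          wb.1 = lam • (a - b) ∧
          (∀ i j, (wb.2 : Mat d) i j = lam * (a i * a j - b i * b j)) ∧
          segment ℝ (w - wb) (w + wb) ⊆ interior (convexHull ℝ (Kset d r)) ∧
          Real.sqrt (∑ i, (wb.1 i) ^ 2) ≥ C * (r - ∑ i, (w.1 i) ^ 2) ∧
          (∀ u ∈ segment ℝ (w - wb) (w + wb),
            Metric.infDist u (frontier (convexHull ℝ (Kset d r)))
              ≥ (1 / 2) * Metric.infDist w (frontier (convexHull ℝ (Kset d r)))) := by
  have hd0 : d ≠ 0 := by omega
  set M : ℝ := (Module.finrank ℝ (Vec d × S0 d) : ℝ) + 1 with hM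
  have hM0 : 0 < M := by positivity
  have hsr : 0 < Real.sqrt r := Real.sqrt_pos.2 hr
  refine ⟨1 / (16 * Real.sqrt r * M), by positivity, fun w hw => ?_⟩
  set S := convexHull ℝ (Kset d r) with hS
  have hSc : Convex ℝ S := convex_convexHull ℝ _
  have hv := int_norm hd0 hr hw
  obtain ⟨R, hR, hRd, hball⟩ := ball_frontier hw
  obtain ⟨ι, _, z, l, hzK, haff, hl, hsum, hwz⟩ :=
    eq_pos_convex_span_of_mem_convexHull (interior_subset hw)
  have hzK' : ∀ i, z i ∈ Kset d r := fun i => hzK ⟨i, rfl⟩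
  have hcard : (Fintype.card ι : ℝ) ≤ M := by
    have h1 := haff.card_le_finrank_succ
    have h2 := Submodule.finrank_le (vectorSpan ℝ (Set.range z))
    rw [hM]
    exact_mod_cast h1.trans (Nat.succ_le_succ h2)
  have hne : Nonempty ι := by
    by_contra h
    rw [not_nonempty_iff] at h
    simp at hsum
  obtain ⟨k, hk⟩ := Finite.exists_max l
  obtain ⟨j, hj⟩ := Finite.exists_max fun i => l i * nn ((z i).1 - (z k).1)
  have ha := Kset_norm hd0 (hzK' k)
  have hb := Kset_norm hd0 (hzK' j)
  have hbd : nn (w.1 - (z k).1) ≤ M * (l j * nn ((z j).1 - (z k).1)) := by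
    have h1 : w.1 - (z k).1 = ∑ i, l i • ((z i).1 - (z k).1) := by
      simp only [smul_sub, Finset.sum_sub_distrib, ← Finset.sum_smul, hsum, one_smul]
      rw [← hwz, Prod.fst_sum]
      simp
    rw [h1]
    refine (nn_sum _).trans ?_
    calc ∑ i, nn (l i • ((z i).1 - (z k).1)) ≤ ∑ i : ι, l j * nn ((z j).1 - (z k).1) := by
          refine Finset.sum_le_sum fun i _ => ?_
          rw [nn_smul (hl i).le]
          exact hj i
      _ = Fintype.card ι * (l j * nn ((z j).1 - (z k).1)) := by simp
      _ ≤ _ := by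
          have : 0 ≤ l j * nn ((z j).1 - (z k).1) := mul_nonneg (hl j).le (Real.sqrt_nonneg _)
          gcongr
  have hgap : r - ∑ i, (w.1 i)^2 ≤ 2 * Real.sqrt r * nn (w.1 - (z k).1) := by
    have h1 := nn_tri (z k).1 w.1
    rw [nn_sub_comm] at h1
    have h2 : nn (z k).1 = Real.sqrt r := by rw [nn, ha]
    rw [h2] at h1
    have h3 : nn w.1 ≤ Real.sqrt r := Real.sqrt_le_sqrt hv.le
    have h4 : 0 ≤ nn w.1 := Real.sqrt_nonneg _
    rw [← nn_sq]
    have h5 := Real.sq_sqrt hr.le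
    nlinarith
  have hpos : 0 < nn (w.1 - (z k).1) := by
    by_contra! h
    nlinarith
  have hba : (z j).1 ≠ (z k).1 := by
    intro h
    rw [h] at hbd
    have : nn ((z k).1 - (z k).1) = 0 := by simp [nn]
    rw [this] at hbd
    simp at hbd
    linarith
  have hnpos : 0 < nn ((z k).1 - (z j).1) := nn_pos (sub_ne_zero.2 hba.symm)
  obtain ⟨c, hcr, hca, hca', hc1, hc2⟩ := exists_near hd hr (z k).1 (z j).1 ha hb hba
    (fun c => ‖(l j / 4) • (Phi d hd0 (z j).1 - Phi d hd0 c)‖ < R / 4 ∧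
      nn ((z k).1 - (z j).1) / 2 < nn ((z k).1 - c)) (by
      refine Filter.Eventually.and ?_ ?_
      · exact cont_aux (Phi d hd0) (Phi_cont d hd0) _ _ (by positivity)
      · have hcont : Continuous fun c => nn ((z k).1 - c) :=
          nn_cont.comp (continuous_const.sub continuous_id)
        refine (hcont.tendsto (z j).1).eventually_const_lt ?_
        linarith)
  have hwb : (l j / 4) • (Phi d hd0 (z k).1 - Phi d hd0 c) =
      (1/4:ℝ) • (l j • (z k - z j)) + (l j / 4) • (Phi d hd0 (z j).1 - Phi d hd0 c) := by
    rw [Kset_eq hd0 (hzK' k), Kset_eq hd0 (hzK' j)]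
    exact dec_aux _ _ _ _
  have hzS : ∀ i, z i ∈ S := fun i => subset_convexHull ℝ _ (hzK' i)
  have hD1 : w + l j • (z k - z j) ∈ S := by
    rw [← hwz]
    exact shift_mem hSc z l hzS hl hsum k j (hk j) _ (abs_of_pos (hl j)).le
  have hD2 : w - l j • (z k - z j) ∈ S := by
    rw [← hwz]
    exact shift_mem_sub hSc z l hzS hl hsum k j (hk j)
  have hseg : ∀ u ∈ segment ℝ (w - (l j / 4) • (Phi d hd0 (z k).1 - Phi d hd0 c))
      (w + (l j / 4) • (Phi d hd0 (z k).1 - Phi d hd0 c)), Metric.ball u (R/2) ⊆ interior S := by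
    intro u hu
    rw [hwb] at hu
    exact interior_maximal (ball_geom hSc hball hD1 hD2 hc1.le hu) Metric.isOpen_ball
  refine ⟨(l j / 4) • (Phi d hd0 (z k).1 - Phi d hd0 c), l j / 4, (z k).1, c,
    by have := hl j; positivity, ha, hcr, hca, hca', rfl, ?_, ?_, ?_, ?_⟩
  · intro i i'
    simp [Phi, ha, hcr]
  · intro u hu
    exact hseg u hu (Metric.mem_ball_self (by positivity))
  · change nn ((l j / 4) • ((z k).1 - c)) ≥ _
    rw [nn_smul (by have := hl j; positivity), ge_iff_le, one_div, inv_mul_le_iff₀ (by positivity)]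
    rw [nn_sub_comm (z j).1] at hbd
    have hlj := hl j
    calc r - ∑ i, (w.1 i)^2 ≤ 2 * Real.sqrt r * nn (w.1 - (z k).1) := hgap
      _ ≤ 2 * Real.sqrt r * (M * (l j * nn ((z k).1 - (z j).1))) := by gcongr
      _ ≤ 2 * Real.sqrt r * (M * (l j * (2 * nn ((z k).1 - c)))) := by gcongr; linarith
      _ = _ := by ring
  · intro u hu
    rcases (frontier S).eq_empty_or_nonempty with h | h
    · simp [h]
    · have h1 : R / 2 ≤ Metric.infDist u (frontier S) := by
        rw [Metric.le_infDist h]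
        intro y hy
        by_contra! hlt
        exact hy.2 (hseg u hu (by rwa [Metric.mem_ball, dist_comm]))
      linarith
end
end

section
/- Let d ≥ 2 and 0 < r < r'. Then K_r is contained in the interior of K_{r'}^co; that is, for every v ∈ ℝ^d with |v|² = r, the pair (v, v⊗v − (r/d)·I_d) lies in the interior of the convex hull of K_{r'} in ℝ^d × S₀^{d×d}. -/
open MeasureTheory

noncomputable section

theorem aux_pt (d : ℕ) (hd : 0 < d) (R : ℝ) (w : Vec d) (hw : ∑ i, w i * w i = R) :
    ∃ p ∈ Kset d R, p.1 = w := by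
  have hd' : (d : ℝ) ≠ 0 := by positivity
  refine ⟨(w, ⟨fun i j => w i * w j - (R / d) * (if i = j then 1 else 0), ?_, ?_⟩), ?_, rfl⟩
  · intro i j
    simp only [mul_comm (w i), eq_comm (a := i)]
  · simp [Finset.sum_sub_distrib, hw]
    field_simp
    simp
  · intro i j
    rfl

theorem aux_seg (d : ℕ) (hd : 0 < d) (R : ℝ) (v e : Vec d) (he : ∑ i, e i * e i = 1)
    (s : ℝ) (hs : 0 < s) (hv : ∑ i, v i * v i = R - s) :
    ∃ p ∈ convexHull ℝ (Kset d R), p.1 = v ∧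
      ∀ i j, (p.2 : Mat d) i j
        = v i * v j + s * (e i * e j) - (R / d) * (if i = j then 1 else 0) := by
  set b : ℝ := ∑ i, v i * e i with hb
  set D : ℝ := Real.sqrt (b ^ 2 + s) with hD
  have hD2 : D ^ 2 = b ^ 2 + s := Real.sq_sqrt (by positivity)
  have hDp : 0 < D := Real.sqrt_pos.mpr (by positivity)
  have hbD : |b| < D := by
    apply abs_lt_of_sq_lt_sq _ hDp.le
    linarith
  obtain ⟨h1, h2⟩ := abs_lt.mp hbD
  have key : ∀ t : ℝ, t ^ 2 + 2 * t * b = s →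
      ∃ p ∈ Kset d R, p.1 = fun i => v i + t * e i := by
    intro t ht
    apply aux_pt d hd
    have : ∀ i, (v i + t * e i) * (v i + t * e i)
        = v i * v i + 2 * t * (v i * e i) + t ^ 2 * (e i * e i) := by intro i; ring
    simp only [this, Finset.sum_add_distrib, ← Finset.mul_sum, he, hv, ← hb]
    linarith
  obtain ⟨p, hp, hp1⟩ := key (-b + D) (by nlinarith)
  obtain ⟨q, hq, hq1⟩ := key (-b - D) (by nlinarith)
  refine ⟨((D + b) / (2 * D)) • p + ((D - b) / (2 * D)) • q, ?_, ?_, ?_⟩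
  · apply (convex_convexHull ℝ _) (subset_convexHull ℝ _ hp) (subset_convexHull ℝ _ hq)
    · apply div_nonneg <;> linarith
    · apply div_nonneg <;> linarith
    · field_simp; ring
  · ext i
    simp only [Prod.fst_add, Prod.smul_fst, Pi.add_apply, Pi.smul_apply, smul_eq_mul, hp1, hq1]
    field_simp
    ring
  · intro i j
    have e1 := hp i j
    have e2 := hq i j
    rw [hp1] at e1
    rw [hq1] at e2
    simp only [Prod.snd_add, Prod.smul_snd, Submodule.coe_add, Submodule.coe_smul,
      Pi.add_apply, Pi.smul_apply, smul_eq_mul, e1, e2]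
    have hs' : s = D ^ 2 - b ^ 2 := by linarith
    rw [hs']
    generalize (R / d) * (if i = j then (1 : ℝ) else 0) = c
    field_simp
    ring

theorem aux_spec (d : ℕ) (M : Matrix (Fin d) (Fin d) ℝ) (hM : M.PosSemidef) :
    ∃ (l : Fin d → ℝ) (e : Fin d → Vec d), (∀ k, 0 ≤ l k) ∧ (∀ k, ∑ i, e k i * e k i = 1) ∧
      ∀ i j, M i j = ∑ k, l k * (e k i * e k j) := by
  refine ⟨hM.1.eigenvalues, fun k i => hM.1.eigenvectorBasis k i, hM.eigenvalues_nonneg, ?_, ?_⟩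
  · intro k
    have := hM.1.eigenvectorBasis.orthonormal.1 k
    have h2 := EuclideanSpace.real_norm_sq_eq (hM.1.eigenvectorBasis k)
    rw [this] at h2
    simp only [← pow_two]
    rw [← h2]; norm_num
  · intro i j
    have := congrFun (congrFun hM.1.spectral_theorem i) j
    rw [Unitary.conjStarAlgAut_apply] at this
    rw [this, Matrix.mul_apply]
    refine Finset.sum_congr rfl fun k _ => ?_
    rw [Matrix.mul_diagonal]
    simp [Matrix.star_apply]
    ring

theorem aux_mem (d : ℕ) (hd : 0 < d) (R : ℝ) (w : Vec d × S0 d)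
    (hv : ∑ i, w.1 i * w.1 i < R)
    (hM : (Matrix.of fun i j => (R / d) * (if i = j then 1 else 0) + (w.2 : Mat d) i j
      - w.1 i * w.1 j : Matrix (Fin d) (Fin d) ℝ).PosSemidef) :
    w ∈ convexHull ℝ (Kset d R) := by
  have hd' : (d : ℝ) ≠ 0 := by positivity
  obtain ⟨l, e, hl, he, h⟩ := aux_spec d _ hM
  simp only [Matrix.of_apply] at h
  set s : ℝ := R - ∑ i, w.1 i * w.1 i with hs
  have hsp : 0 < s := by linarith
  have hsum : ∑ k, l k = s := by
    have h3 : ∑ i, ((R / d) * (if i = i then 1 else 0) + (w.2 : Mat d) i i - w.1 i * w.1 i)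
        = ∑ i, ∑ k, l k * (e k i * e k i) := Finset.sum_congr rfl fun i _ => h i i
    rw [Finset.sum_comm] at h3
    simp only [← Finset.mul_sum, he, mul_one] at h3
    rw [← h3, Finset.sum_sub_distrib, Finset.sum_add_distrib, w.2.2.2]
    simp
    field_simp
    simp only [hs, pow_two]
  choose p hp hp1 hp2 using fun k => aux_seg d hd R w.1 (e k) (he k) s hsp (by linarith)
  have hw : w = ∑ k, (l k / s) • p k := by
    have h1 : ∑ k, l k / s = 1 := by
      rw [← Finset.sum_div, hsum, div_self hsp.ne']
    apply Prod.ext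
    · rw [Prod.fst_sum]
      simp only [Prod.smul_fst, hp1, ← Finset.sum_smul, h1, one_smul]
    · rw [Prod.snd_sum]
      apply Subtype.ext
      funext i j
      simp only [Prod.smul_snd, Submodule.coe_sum, Submodule.coe_smul, Finset.sum_apply,
        Pi.smul_apply, smul_eq_mul, hp2]
      have h4 : ∀ k, l k / s * (w.1 i * w.1 j + s * (e k i * e k j)
          - R / d * (if i = j then 1 else 0)) =
          l k / s * (w.1 i * w.1 j - R / d * (if i = j then 1 else 0)) + l k * (e k i * e k j) := by
        intro k
        field_simp
        ring
      simp only [h4, Finset.sum_add_distrib, ← Finset.sum_mul, h1, ← h i j]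
      ring
  rw [hw]
  refine (convex_convexHull ℝ _).sum_mem (fun k _ => div_nonneg (hl k) hsp.le) ?_ fun k _ => hp k
  rw [← Finset.sum_div, hsum, div_self hsp.ne']

theorem aux_psd (d : ℕ) (c : ℝ) (M : Matrix (Fin d) (Fin d) ℝ) (hsym : ∀ i j, M i j = M j i)
    (h : ∀ i j, |M i j - c * (if i = j then 1 else 0)| * d ≤ c) : M.PosSemidef := by
  refine .of_dotProduct_mulVec_nonneg (by ext i j; simp [hsym i j]) fun x => ?_
  have h0 : star x ⬝ᵥ (M.mulVec x) = c * ∑ i, x i ^ 2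
      + ∑ i, ∑ j, (M i j - c * (if i = j then 1 else 0)) * (x i * x j) := by
    simp only [dotProduct, Matrix.mulVec, Finset.mul_sum, ← Finset.sum_add_distrib]
    refine Finset.sum_congr rfl fun i _ => ?_
    simp only [sub_mul, Finset.sum_sub_distrib]
    simp
    ring_nf
  rcases Nat.eq_zero_or_pos d with rfl | hd
  · simp
  have hd' : (0 : ℝ) < d := by positivity
  have h1 : ∀ i j, -(c / d) * ((x i ^ 2 + x j ^ 2) / 2)
      ≤ (M i j - c * (if i = j then 1 else 0)) * (x i * x j) := by
    intro i j
    have h2 : |M i j - c * (if i = j then 1 else 0)| ≤ c / d := by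
      rw [le_div_iff₀ hd']; exact h i j
    have h3 : |x i * x j| ≤ (x i ^ 2 + x j ^ 2) / 2 := by
      rw [abs_le]; constructor <;> nlinarith [sq_nonneg (x i + x j), sq_nonneg (x i - x j)]
    have h4 := mul_le_mul h2 h3 (abs_nonneg _) ((abs_nonneg _).trans h2)
    rw [← abs_mul] at h4
    linarith [neg_abs_le ((M i j - c * (if i = j then 1 else 0)) * (x i * x j))]
  have h5 := Finset.sum_le_sum fun i (_ : i ∈ Finset.univ) =>
    Finset.sum_le_sum fun j (_ : j ∈ Finset.univ) => h1 i j
  rw [h0]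
  have h6 : ∑ i, ∑ j, -(c / d) * ((x i ^ 2 + x j ^ 2) / 2) = - (c * ∑ i, x i ^ 2) := by
    simp only [← Finset.mul_sum, ← Finset.sum_div, Finset.sum_add_distrib, Finset.sum_const,
      Finset.card_univ, Fintype.card_fin, nsmul_eq_mul]
    field_simp
    ring
  linarith

/-- Let `d ≥ 2`, `0 < r < r'`. Then `K_r` is contained in the interior of
`K_{r'}^co`: for every `v` with `|v|² = r`, the pair `(v, v⊗v − (r/d)·I_d)` lies in the
interior of the convex hull of `K_{r'}` in ℝ^d × S₀^{d×d}. -/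
theorem stmt9 (d : ℕ) (hd : 2 ≤ d) (r r' : ℝ) (hr : 0 < r) (hrr' : r < r') :
    Kset d r ⊆ interior (convexHull ℝ (Kset d r')) := by
  intro w hw
  have hd0 : 0 < d := by omega
  have hd' : (0 : ℝ) < d := by positivity
  have hwr : ∑ i, w.1 i * w.1 i = r := by
    have h3 : ∑ i, (w.2 : Mat d) i i = ∑ i, (w.1 i * w.1 i - (r / d) * (if i = i then 1 else 0)) :=
      Finset.sum_congr rfl fun i _ => hw i i
    rw [w.2.2.2, Finset.sum_sub_distrib] at h3
    simp at h3
    field_simp at h3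
    simp only [← pow_two]
    linarith
  have hc : 0 < (r' - r) / d := div_pos (by linarith) hd'
  rw [mem_interior_iff_mem_nhds]
  have ev1 : ∀ᶠ z : Vec d × S0 d in nhds w, ∑ i, z.1 i * z.1 i < r' := by
    have : Continuous fun z : Vec d × S0 d => ∑ i, z.1 i * z.1 i := by fun_prop
    exact this.continuousAt.eventually_lt_const (by simpa [hwr] using hrr')
  have ev2 : ∀ᶠ z : Vec d × S0 d in nhds w, ∀ i j,
      |((r' / d) * (if i = j then 1 else 0) + (z.2 : Mat d) i j - z.1 i * z.1 j)
        - (r' - r) / d * (if i = j then 1 else 0)| * d < (r' - r) / d := by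
    rw [Filter.eventually_all]
    intro i
    rw [Filter.eventually_all]
    intro j
    have : Continuous fun z : Vec d × S0 d =>
        |((r' / d) * (if i = j then 1 else 0) + (z.2 : Mat d) i j - z.1 i * z.1 j)
        - (r' - r) / d * (if i = j then 1 else 0)| * d := by
      have h2 : Continuous fun z : Vec d × S0 d => (z.2 : Mat d) i j :=
        (continuous_apply j).comp ((continuous_apply i).comp
          (continuous_subtype_val.comp continuous_snd))
      have h3 : ∀ k, Continuous fun z : Vec d × S0 d => z.1 k :=
        fun k => (continuous_apply k).comp continuous_fst
      exact ((((continuous_const.add h2).sub ((h3 i).mul (h3 j))).sub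
        continuous_const).abs).mul continuous_const
    refine this.continuousAt.eventually_lt_const ?_
    have h0 : ((r' / d) * (if i = j then 1 else 0) + (w.2 : Mat d) i j - w.1 i * w.1 j)
        - (r' - r) / d * (if i = j then 1 else 0) = 0 := by
      rw [hw i j]; ring
    beta_reduce
    rw [h0]
    simpa using hc
  filter_upwards [ev1, ev2] with z h1 h2
  refine aux_mem d hd0 r' z h1 (aux_psd d ((r' - r) / d) _ ?_ fun i j => (h2 i j).le)
  intro i j
  simp only [Matrix.of_apply, z.2.2.1 i j, mul_comm (z.1 i), eq_comm (a := i)]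
end
end

section
/- Let d ≥ 2 and r > 0. The convex hull of K_r in ℝ^d × S₀^{d×d} equals {(v, U) ∈ ℝ^d × S₀^{d×d} : v⊗v − U ≤ (r/d)·I_d}, where, for symmetric matrices A and B, A ≤ B means that B − A is positive semidefinite. -/
open MeasureTheory

noncomputable section

lemma aux_mk (d : ℕ) (hd : 2 ≤ d) (r : ℝ) (v b : Vec d)
    (h : ∑ i, v i ^ 2 + ∑ i, b i ^ 2 = r) :
    ∃ U : S0 d, ∀ i j, (U : Mat d) i j =
      v i * v j + b i * b j - (r / d) * (if i = j then 1 else 0) := by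
  have hd0 : (d : ℝ) ≠ 0 := by
    have : d ≠ 0 := by omega
    exact_mod_cast this
  refine ⟨⟨fun i j => v i * v j + b i * b j - (r / d) * (if i = j then 1 else 0), ?_, ?_⟩,
    fun i j => rfl⟩
  · intro i j
    simp only [eq_comm (a := i) (b := j)]
    ring
  · simp only [Finset.sum_sub_distrib, Finset.sum_add_distrib, if_true, Finset.sum_const,
      Finset.card_univ, Fintype.card_fin, nsmul_eq_mul, ← pow_two, mul_one]
    rw [h]
    field_simp
    ring

lemma aux_two (d : ℕ) (hd : 2 ≤ d) (r s : ℝ) (hs : 0 < s) (v b : Vec d)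
    (hb : ∑ i, b i ^ 2 = s) (h : ∑ i, v i ^ 2 + s = r) :
    ∃ U : S0 d, (v, U) ∈ convexHull ℝ (Kset d r) ∧ ∀ i j, (U : Mat d) i j =
      v i * v j + b i * b j - (r / d) * (if i = j then 1 else 0) := by
  obtain ⟨U, hU⟩ := aux_mk d hd r v b (by rw [hb, h])
  refine ⟨U, ?_, hU⟩
  set c : ℝ := (∑ i, v i * b i) / s with hc
  have hcs : ∑ i, v i * b i = c * s := by rw [hc]; field_simp
  have key : ∀ l : ℝ, l ^ 2 + 2 * c * l - 1 = 0 →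
      ∃ W : S0 d, (((fun i => v i + l * b i), W) : Vec d × S0 d) ∈ Kset d r := by
    intro l hl
    obtain ⟨W, hW⟩ := aux_mk d hd r (fun i => v i + l * b i) 0 (by
      have : ∀ i, (v i + l * b i) ^ 2 = v i ^ 2 + 2 * l * (v i * b i) + l ^ 2 * b i ^ 2 := by
        intro i; ring
      simp only [this, Finset.sum_add_distrib, ← Finset.mul_sum, hb, hcs]
      simp
      linear_combination h + s * hl)
    refine ⟨W, ?_⟩
    intro i j
    simpa using hW i j
  obtain ⟨l, hl0, hl⟩ : ∃ l : ℝ, 0 < l ∧ l ^ 2 + 2 * c * l - 1 = 0 := by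
    have h1 : Real.sqrt (c ^ 2 + 1) ^ 2 = c ^ 2 + 1 := Real.sq_sqrt (by positivity)
    refine ⟨-c + Real.sqrt (c ^ 2 + 1), ?_, by linear_combination h1⟩
    have : c < Real.sqrt (c ^ 2 + 1) := Real.lt_sqrt_of_sq_lt (by linarith)
    linarith
  have hl' : (-(1 / l)) ^ 2 + 2 * c * (-(1 / l)) - 1 = 0 := by
    field_simp
    linear_combination -hl
  obtain ⟨W1, h1⟩ := key l hl
  obtain ⟨W2, h2⟩ := key _ hl'
  have hp : 0 ≤ 1 / (1 + l ^ 2) := by positivity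
  have hq : 0 ≤ l ^ 2 / (1 + l ^ 2) := by positivity
  have hpq : 1 / (1 + l ^ 2) + l ^ 2 / (1 + l ^ 2) = 1 := by field_simp
  have := (convex_convexHull ℝ (Kset d r)) (subset_convexHull ℝ _ h1)
    (subset_convexHull ℝ _ h2) hp hq hpq
  convert this using 1
  refine Prod.ext ?_ (Subtype.ext ?_)
  · funext i
    simp
    field_simp
    ring
  · funext i j
    have e1 := h1 i j
    have e2 := h2 i j
    simp only at e1 e2
    simp only [Prod.snd_add, Prod.smul_snd, Submodule.coe_add, Submodule.coe_smul, Pi.add_apply,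
      Pi.smul_apply, smul_eq_mul, hU, e1, e2]
    generalize (if i = j then (1 : ℝ) else 0) = δ
    generalize r / (d : ℝ) = ρ
    field_simp
    ring

lemma aux_norm (d : ℕ) (hd : 2 ≤ d) (s : ℝ) (hs : 0 < s) (a : Vec d) :
    ∃ b : Vec d, ∑ i, b i ^ 2 = s ∧
      ∀ i j, a i * a j = ((∑ i, a i ^ 2) / s) * (b i * b j) := by
  have hn : 0 ≤ ∑ i, a i ^ 2 := Finset.sum_nonneg fun i _ => sq_nonneg _
  rcases hn.eq_or_lt with h | h
  · have ha : ∀ i, a i = 0 := by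
      intro i
      have := (Finset.sum_eq_zero_iff_of_nonneg (fun i _ => sq_nonneg (a i))).1 h.symm i
        (Finset.mem_univ _)
      exact pow_eq_zero_iff (two_ne_zero) |>.1 this
    refine ⟨fun i => if i = ⟨0, by omega⟩ then Real.sqrt s else 0, ?_, ?_⟩
    · simp [ite_pow, Real.sq_sqrt hs.le]
    · intro i j
      simp [ha]
  · set n := ∑ i, a i ^ 2 with hndef
    have hq : Real.sqrt (s / n) ^ 2 = s / n := Real.sq_sqrt (by positivity)
    refine ⟨fun i => Real.sqrt (s / n) * a i, ?_, ?_⟩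
    · simp only [mul_pow, ← Finset.mul_sum, hq, ← hndef]
      field_simp
    · intro i j
      have : n / s * (Real.sqrt (s / n) * a i * (Real.sqrt (s / n) * a j)) =
        n / s * Real.sqrt (s / n) ^ 2 * (a i * a j) := by ring
      rw [this, hq]
      field_simp

lemma aux_form (d : ℕ) (v ξ : Vec d) (U : Mat d) :
    ∑ i, ∑ j, (v i * v j - U i j) * ξ i * ξ j =
      (∑ i, v i * ξ i) ^ 2 - ∑ i, ∑ j, U i j * ξ i * ξ j := by
  rw [pow_two, Finset.sum_mul_sum, ← Finset.sum_sub_distrib]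
  refine Finset.sum_congr rfl fun i _ => ?_
  rw [← Finset.sum_sub_distrib]
  refine Finset.sum_congr rfl fun j _ => ?_
  ring

lemma aux_convex (d : ℕ) (r : ℝ) : Convex ℝ {w : Vec d × S0 d | ∀ ξ : Vec d,
        ∑ i, ∑ j, (w.1 i * w.1 j - (w.2 : Mat d) i j) * ξ i * ξ j
          ≤ (r / d) * ∑ i, (ξ i) ^ 2} := by
  intro x hx y hy a b ha hb hab ξ
  have h1 := hx ξ
  have h2 := hy ξ
  rw [aux_form] at h1 h2 ⊢
  have e1 : ∑ i, (a • x + b • y).1 i * ξ i = a * ∑ i, x.1 i * ξ i + b * ∑ i, y.1 i * ξ i := by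
    simp only [Finset.mul_sum, ← Finset.sum_add_distrib]
    refine Finset.sum_congr rfl fun i _ => ?_
    simp
    ring
  have e2 : ∑ i, ∑ j, ((a • x + b • y).2 : Mat d) i j * ξ i * ξ j =
      a * ∑ i, ∑ j, (x.2 : Mat d) i j * ξ i * ξ j
        + b * ∑ i, ∑ j, (y.2 : Mat d) i j * ξ i * ξ j := by
    simp only [Finset.mul_sum, ← Finset.sum_add_distrib]
    refine Finset.sum_congr rfl fun i _ => Finset.sum_congr rfl fun j _ => ?_
    simp
    ring
  rw [e1, e2]
  generalize ∑ i, x.1 i * ξ i = X at *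
  generalize ∑ i, y.1 i * ξ i = Y at *
  generalize ∑ i, ∑ j, (x.2 : Mat d) i j * ξ i * ξ j = P at *
  generalize ∑ i, ∑ j, (y.2 : Mat d) i j * ξ i * ξ j = Q at *
  generalize (r / d) * ∑ i, (ξ i) ^ 2 = C at *
  obtain rfl : b = 1 - a := by linarith
  nlinarith [mul_le_mul_of_nonneg_left h1 ha, mul_le_mul_of_nonneg_left h2 hb,
    mul_nonneg (mul_nonneg ha hb) (sq_nonneg (X - Y))]

lemma aux_K (d : ℕ) (r : ℝ) : Kset d r ⊆ {w : Vec d × S0 d | ∀ ξ : Vec d,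
        ∑ i, ∑ j, (w.1 i * w.1 j - (w.2 : Mat d) i j) * ξ i * ξ j
          ≤ (r / d) * ∑ i, (ξ i) ^ 2} := by
  intro w hw ξ
  have : ∀ i j, (w.1 i * w.1 j - (w.2 : Mat d) i j) * ξ i * ξ j =
      if i = j then (r / d) * (ξ i * ξ j) else 0 := by
    intro i j
    rw [hw i j]
    split_ifs <;> ring
  simp only [this, Finset.sum_ite_eq, Finset.mem_univ, if_true, Finset.mul_sum, pow_two]
  exact le_refl _

/-- Let `d ≥ 2`, `r > 0`. The convex hull of `K_r` in ℝ^d × S₀^{d×d}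
is `{(v, U) : v⊗v − U ≤ (r/d)·I_d}`, the matrix inequality meaning positive
semidefiniteness of the difference, i.e. `ξᵀ(v⊗v − U)ξ ≤ (r/d)|ξ|²` for all `ξ`. -/
theorem stmt10 (d : ℕ) (hd : 2 ≤ d) (r : ℝ) (hr : 0 < r) :
    convexHull ℝ (Kset d r) =
      {w : Vec d × S0 d | ∀ ξ : Vec d,
        ∑ i, ∑ j, (w.1 i * w.1 j - (w.2 : Mat d) i j) * ξ i * ξ j
          ≤ (r / d) * ∑ i, (ξ i) ^ 2} := by
  refine Set.Subset.antisymm (convexHull_min (aux_K d r) (aux_convex d r)) ?_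
  rintro ⟨v, U⟩ hw
  have hd0 : (d : ℝ) ≠ 0 := by
    have : d ≠ 0 := by omega
    exact_mod_cast this
  have hsym := U.2.1
  have htr : ∑ i, (U : Mat d) i i = 0 := U.2.2
  let M : Matrix (Fin d) (Fin d) ℝ := Matrix.of fun i j =>
    (r / d) * (if i = j then 1 else 0) + (U : Mat d) i j - v i * v j
  have hM : M.PosSemidef := by
    refine Matrix.PosSemidef.of_dotProduct_mulVec_nonneg ?_ ?_
    · ext i j
      simp only [M, Matrix.conjTranspose_apply, Matrix.of_apply, star_trivial,
        eq_comm (a := i) (b := j), hsym i j]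
      ring
    · intro ξ
      have h := hw ξ
      have e : star ξ ⬝ᵥ M.mulVec ξ = (r / d) * ∑ i, (ξ i) ^ 2 -
          ∑ i, ∑ j, (v i * v j - (U : Mat d) i j) * ξ i * ξ j := by
        simp only [dotProduct, Matrix.mulVec, Finset.mul_sum, ← Finset.sum_sub_distrib, M,
          Matrix.of_apply, star_trivial]
        refine Finset.sum_congr rfl fun i _ => ?_
        have : r / d * ξ i ^ 2 = ∑ j, if i = j then r / d * (ξ i * ξ j) else 0 := by
          simp [pow_two]
        rw [this, ← Finset.sum_sub_distrib]
        refine Finset.sum_congr rfl fun j _ => ?_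
        split_ifs <;> simp <;> ring
      rw [e]
      exact sub_nonneg.2 h
  obtain ⟨B, hB⟩ : ∃ B : Matrix (Fin d) (Fin d) ℝ, M = B.conjTranspose * B := by
    open scoped MatrixOrder in
    exact CStarAlgebra.nonneg_iff_eq_star_mul_self.1 hM.nonneg
  have hBM : ∀ i j, (r / d) * (if i = j then 1 else 0) + (U : Mat d) i j - v i * v j
      = ∑ k, B k i * B k j := by
    intro i j
    have := congrFun (congrFun hB i) j
    simpa [M, Matrix.mul_apply] using this
  have hT : ∑ k, ∑ i, B k i ^ 2 = r - ∑ i, v i ^ 2 := by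
    rw [Finset.sum_comm]
    have : ∀ i, ∑ k, B k i ^ 2 = r / d + (U : Mat d) i i - v i ^ 2 := by
      intro i
      have := hBM i i
      simp only [if_true, mul_one, ← pow_two] at this
      exact this.symm
    simp only [this, Finset.sum_sub_distrib, Finset.sum_add_distrib, htr]
    simp
    field_simp
  have hn : 0 ≤ ∑ k, ∑ i, B k i ^ 2 :=
    Finset.sum_nonneg fun k _ => Finset.sum_nonneg fun i _ => sq_nonneg _
  rcases hn.eq_or_lt with h | h
  · have hz : ∀ k i, B k i = 0 := by
      intro k i
      have h1 := (Finset.sum_eq_zero_iff_of_nonneg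
        (fun k _ => Finset.sum_nonneg fun i _ => sq_nonneg (B k i))).1 h.symm k (Finset.mem_univ _)
      have h2 := (Finset.sum_eq_zero_iff_of_nonneg (fun i _ => sq_nonneg (B k i))).1 h1 i
        (Finset.mem_univ _)
      exact pow_eq_zero_iff (two_ne_zero) |>.1 h2
    apply subset_convexHull
    intro i j
    have := hBM i j
    simp only [hz, mul_zero, Finset.sum_const_zero] at this
    simp only
    linarith
  · set s := ∑ k, ∑ i, B k i ^ 2 with hs
    choose b hb1 hb2 using fun k => aux_norm d hd s h (B k)
    choose W hW1 hW2 using fun k => aux_two d hd r s h v (b k) (hb1 k) (by linarith)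
    have ht : ∑ k, (∑ i, B k i ^ 2) / s = 1 := by
      rw [← Finset.sum_div, ← hs]
      exact div_self h.ne'
    have hmem := (convex_convexHull ℝ (Kset d r)).sum_mem (t := Finset.univ)
      (w := fun k => (∑ i, B k i ^ 2) / s) (z := fun k => (v, W k))
      (fun k _ => div_nonneg (Finset.sum_nonneg fun i _ => sq_nonneg _) h.le) ht
      (fun k _ => hW1 k)
    convert hmem using 1
    refine Prod.ext ?_ (Subtype.ext ?_)
    · simp only [Prod.fst_sum, Prod.smul_fst, ← Finset.sum_smul, ht, one_smul]
    · funext i j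
      simp only [Prod.snd_sum, Prod.smul_snd, Submodule.coe_sum, Submodule.coe_smul,
        Finset.sum_apply, Pi.smul_apply, smul_eq_mul, hW2]
      have e : ∀ k, (∑ i, B k i ^ 2) / s *
          (v i * v j + b k i * b k j - (r / d) * (if i = j then 1 else 0)) =
          (∑ i, B k i ^ 2) / s * (v i * v j - (r / d) * (if i = j then 1 else 0))
            + B k i * B k j := by
        intro k
        rw [hb2 k i j]
        ring
      simp only [e, Finset.sum_add_distrib, ← Finset.sum_mul, ht, ← hBM]
      ring
end
end
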